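/- arXiv:2306.12222 — 2 statements merged into one kernel-verified Lean document; each statement's English description precedes it below -/
import Mathlib

section
/- Let r ∈ {4,5}, let n ≥ r−1 and k ≥ C(r,2) be integers, and let (G_1, …, G_k) be a rainbow K_r-free family of simple graphs on the vertex set [n]. Then the total number of edges satisfies Σ_{i=1}^{k} |E(G_i)| ≤ max{ (C(r,2)−1)·C(n,2), k·t_{r−1}(n) }. -/
open Finset SimpleGraph

/-- `t_t(n)`: the number of edges of the Turán graph `T_t(n)`, the complete `t`-partite
graph on `n` vertices with part sizes as equal as possible. -/
def turanE (t n : ℕ) : ℕ := (SimpleGraph.turanGraph n t).edgeFinset.card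

/-- A family `G_1, …, G_k` of simple graphs on `[n]` is rainbow `K_r`-free: there is no
`r`-set `S` together with an assignment `c` of pairwise distinct indices to the pairs
inside `S` such that each pair is an edge of the graph with the assigned index. -/
def RainbowCliqueFree (n k r : ℕ) (G : Fin k → SimpleGraph (Fin n)) : Prop :=
  ¬ ∃ (S : Finset (Fin n)) (c : Sym2 (Fin n) → Fin k),
      S.card = r ∧
      Set.InjOn c {e : Sym2 (Fin n) | ¬ e.IsDiag ∧ ∀ v ∈ e, v ∈ S} ∧
      ∀ u ∈ S, ∀ v ∈ S, u ≠ v → (G (c s(u, v))).Adj u v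

/-!
Let `s = r - 1`, and let the weight of a pair be the number of graphs containing it. By Hall's
theorem a family is rainbow `K_r`-free exactly when every `r`-set has, for some `t`, more than `t`
pairs of weight at most `t`.

When `k` is only slightly larger than `C(r,2)`, the weight is compared with `k * t_s(n)` by
induction on the number of vertices. Call an `s`-set rich if its average weight exceeds
`C(r,2) - 1`, and a pair thin if its weight is at most `1`. If some rich `T` has no thin pair, then
the Hall obstruction on `T ∪ {x}` forces every outside vertex `x` to send weight at most
`(s - 1) * k` to `T`, which is what deleting `T` from a Turán graph costs. Otherwise a rich `T` has
exactly one thin pair `xy`, and `T \ {y}` can be deleted: an outside vertex sending weight more than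
`(s - 2) * k + 1` to it, hence more than `y` does, would form with it a rich set again, whose thin
pair lies at that vertex and so bounds the weight it sends after all. If there is no rich set at
all, averaging over the `s`-sets gives `(C(r,2) - 1) * C(n,2)`.

This proves `k * t_s(a)` for all `a` up to any `N` below which it is the larger of the two bounds.
The bounds happen to be equal at some such `N`, so for `n > N` averaging over `N`-sets gives
`(C(r,2) - 1) * C(n,2)`. Once `2k ≥ s(s + 2)` the Turán bound is always the larger one, and then
averaging over the deletion of one graph carries it from `k` to `k + 1`.
-/

/-- The edge set of the complete graph on `A`, as a finset of unordered pairs. -/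
def pairs {V : Type*} [DecidableEq V] (A : Finset V) : Finset (Sym2 V) :=
  {e ∈ A.sym2 | ¬ e.IsDiag}

section Pairs

variable {V M : Type*} [DecidableEq V] [AddCommMonoid M] {A B : Finset V} {x y : V} {e : Sym2 V}

lemma mem_pairs : e ∈ pairs A ↔ ¬ e.IsDiag ∧ ∀ v ∈ e, v ∈ A := by
  rw [pairs, mem_filter, mem_sym2_iff, and_comm]

lemma mk_mem_pairs : s(x, y) ∈ pairs A ↔ x ≠ y ∧ x ∈ A ∧ y ∈ A := by
  rw [pairs, mem_filter, mk_mem_sym2_iff, Sym2.mk_isDiag_iff, and_comm]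

lemma mem_pairs_iff_toFinset_subset : e ∈ pairs A ↔ ¬ e.IsDiag ∧ e.toFinset ⊆ A := by
  simp only [mem_pairs, subset_iff, Sym2.mem_toFinset]

lemma pairs_mono (h : A ⊆ B) : pairs A ⊆ pairs B :=
  filter_subset_filter _ (sym2_mono h)

lemma card_pairs (A : Finset V) : #(pairs A) = (#A).choose 2 := by
  rw [pairs, sym2_eq_image, Sym2.filter_image_mk_not_isDiag, Sym2.card_image_offDiag]

lemma pairs_insert (hx : x ∉ A) : pairs (insert x A) = pairs A ∪ A.image (s(x, ·)) := by
  ext e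
  induction e using Sym2.ind with
  | _ u v =>
    simp only [mk_mem_pairs, mem_union, mem_image, mem_insert, Sym2.eq_iff]
    grind

lemma sum_pairs_insert (f : Sym2 V → M) (hx : x ∉ A) :
    ∑ e ∈ pairs (insert x A), f e = ∑ e ∈ pairs A, f e + ∑ u ∈ A, f s(x, u) := by
  have hdisj : Disjoint (pairs A) (A.image (s(x, ·))) := by
    rw [Finset.disjoint_left]
    rintro e he hxe
    obtain ⟨u, -, rfl⟩ := mem_image.mp hxe
    exact hx (mk_mem_pairs.mp he).2.1
  rw [pairs_insert hx, sum_union hdisj, sum_image fun u _ v _ h ↦ Sym2.congr_right.mp h]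

lemma sum_pairs_union (f : Sym2 V → M) (hAB : Disjoint A B) :
    ∑ e ∈ pairs (A ∪ B), f e =
      ∑ e ∈ pairs A, f e + ∑ x ∈ B, ∑ u ∈ A, f s(x, u) + ∑ e ∈ pairs B, f e := by
  induction B using Finset.induction_on with
  | empty => simp [pairs]
  | insert x B hx ih =>
    obtain ⟨hxA, hAB⟩ := disjoint_insert_right.mp hAB
    rw [union_insert, sum_pairs_insert f (by simp [hxA, hx]), ih hAB, sum_insert hx,
      sum_pairs_insert f hx, sum_union hAB]
    abel

lemma sum_powersetCard_sum_pairs (f : Sym2 V → M) {s : ℕ} (hs : 2 ≤ s) (A : Finset V) :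
    ∑ S ∈ A.powersetCard s, ∑ e ∈ pairs S, f e =
      (#A - 2).choose (s - 2) • ∑ e ∈ pairs A, f e := by
  have hcomm : ∀ S e, S ∈ A.powersetCard s ∧ e ∈ pairs S ↔
      S ∈ {S ∈ A.powersetCard s | e.toFinset ⊆ S} ∧ e ∈ pairs A := by
    intro S e
    simp only [mem_filter, mem_powersetCard, mem_pairs_iff_toFinset_subset]
    exact ⟨fun ⟨⟨hSA, hS⟩, he, heS⟩ ↦ ⟨⟨⟨hSA, hS⟩, heS⟩, he, heS.trans hSA⟩,
      fun ⟨⟨hS, heS⟩, he, _⟩ ↦ ⟨hS, he, heS⟩⟩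
  rw [sum_comm' hcomm, smul_sum]
  refine sum_congr rfl fun e he ↦ ?_
  obtain ⟨hdiag, heA⟩ := mem_pairs_iff_toFinset_subset.mp he
  have hcard : #e.toFinset = 2 := e.card_toFinset_of_not_isDiag hdiag
  rw [sum_const, card_filter_powersetCard_subset _ _ _ heA (hcard.trans_le hs), hcard]

lemma sum_pairs_le_of_forall_powersetCard {f : Sym2 V → ℕ} {s c : ℕ} (hs : 2 ≤ s)
    (hsA : s ≤ #A) (h : ∀ S ∈ A.powersetCard s, ∑ e ∈ pairs S, f e ≤ c * s.choose 2) :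
    ∑ e ∈ pairs A, f e ≤ c * (#A).choose 2 := by
  refine Nat.le_of_mul_le_mul_left (c := (#A - 2).choose (s - 2)) ?_
    (Nat.choose_pos (Nat.sub_le_sub_right hsA 2))
  calc (#A - 2).choose (s - 2) * ∑ e ∈ pairs A, f e
      = ∑ S ∈ A.powersetCard s, ∑ e ∈ pairs S, f e := by
        rw [sum_powersetCard_sum_pairs f hs, smul_eq_mul]
    _ ≤ (#A).choose s * (c * s.choose 2) := by
        rw [← card_powersetCard]
        exact sum_le_card_nsmul _ _ _ h
    _ = (#A - 2).choose (s - 2) * (c * (#A).choose 2) := by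
        rw [mul_left_comm, Nat.choose_mul hs]
        ring

end Pairs

section BoundedSums

variable {ι : Type*} {P : Finset ι} {f : ι → ℕ} {k t : ℕ}

lemma sum_add_card_filter_le_mul_le (hf : ∀ i ∈ P, f i ≤ k) (ht : t ≤ k) :
    ∑ i ∈ P, f i + #{i ∈ P | f i ≤ t} * (k - t) ≤ #P * k := by
  rw [card_filter, sum_mul, ← sum_add_distrib]
  refine sum_le_card_nsmul _ _ _ fun i hi ↦ ?_
  have := hf i hi
  split_ifs <;> omega

lemma sum_le_card_pred_mul_add {i : ι} (hf : ∀ j ∈ P, f j ≤ k) (hi : i ∈ P) :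
    ∑ j ∈ P, f j ≤ (#P - 1) * k + f i := by
  classical
  rw [← sum_erase_add P f hi, ← card_erase_of_mem hi]
  gcongr
  exact sum_le_card_nsmul _ _ _ fun j hj ↦ hf j (mem_of_mem_erase hj)

end BoundedSums

section Turan

variable {s : ℕ}

lemma turanE_add (s n : ℕ) : turanE s (n + s) = turanE s n + n * (s - 1) + s.choose 2 :=
  card_edgeFinset_turanGraph_add

lemma turanE_of_le {n : ℕ} (h : n ≤ s) : turanE s n = n.choose 2 := by
  obtain rfl | hlt := h.eq_or_lt
  · simpa [turanE, card_edgeFinset_turanGraph] using turanE_add n 0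
  · simp [turanE, card_edgeFinset_turanGraph, Nat.mod_eq_of_lt hlt]

lemma choose_succ_two (n : ℕ) : (n + 1).choose 2 = n + n.choose 2 := by
  rw [Nat.choose_succ_succ' n 1, Nat.choose_one_right]

lemma turanE_succ (hs : 0 < s) (n : ℕ) : turanE s (n + 1) + n / s = turanE s n + n := by
  induction n using Nat.strong_induction_on with
  | _ n ih =>
    rcases lt_or_ge n s with hn | hn
    · rw [turanE_of_le hn, turanE_of_le hn.le, Nat.div_eq_of_lt hn, choose_succ_two]
      omega
    · obtain ⟨a, rfl⟩ := Nat.exists_eq_add_of_le' hn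
      have := ih a (by omega)
      rw [add_right_comm, turanE_add, turanE_add, Nat.add_div_right a hs, Nat.succ_mul]
      omega

lemma turanE_add_pred (hs : 0 < s) (n : ℕ) :
    turanE s (n + (s - 1)) + n = turanE s n + (s - 1) * n + (s - 1).choose 2 + n ⌈/⌉ s := by
  obtain ⟨j, rfl⟩ := Nat.exists_eq_add_of_lt hs
  simp only [zero_add, Nat.add_sub_cancel, Nat.ceilDiv_eq_add_pred_div, ← Nat.add_assoc]
  have hadd := turanE_add (j + 1) n
  have hsucc := turanE_succ hs (n + j)
  rw [choose_succ_two, Nat.add_sub_cancel, mul_comm n] at hadd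
  simp only [zero_add, ← Nat.add_assoc] at hadd hsucc
  omega

lemma pred_mul_choose_two_le (hs : 0 < s) (n : ℕ) :
    (s - 1) * n.choose 2 ≤ s * turanE s n := by
  induction n with
  | zero => simp
  | succ n ih =>
    obtain ⟨j, rfl⟩ := Nat.exists_eq_add_of_lt hs
    have hsucc := turanE_succ hs n
    have hdiv := Nat.mul_div_le n (0 + j + 1)
    rw [choose_succ_two]
    simp only [zero_add, Nat.add_sub_cancel] at *
    nlinarith

lemma mul_turanE_add (k s n : ℕ) :
    k * turanE s (n + s) = k * s.choose 2 + (s - 1) * k * n + k * turanE s n := by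
  rw [turanE_add]
  ring

lemma le_mul_turanE_add_pred {k : ℕ} (hs : 2 ≤ s) (hsk : s ≤ k) (n : ℕ) :
    k * (s - 1).choose 2 + ((s - 2) * k + 1) * n + k * turanE s n ≤
      k * turanE s (n + (s - 1)) := by
  have hturan := turanE_add_pred (by omega : 0 < s) n
  have hceil : n ≤ k * (n ⌈/⌉ s) :=
    (le_smul_ceilDiv (by omega : 0 < s)).trans (Nat.mul_le_mul_right _ hsk)
  obtain ⟨j, rfl⟩ := Nat.exists_eq_add_of_le' hs
  simp only [Nat.add_sub_cancel, show j + 2 - 1 = j + 1 from rfl] at *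
  nlinarith

end Turan

section Hall

variable {ι α : Type*} [Nonempty α]

lemma exists_injOn_mem_of_card_filter_le {P : Finset ι} {L : ι → Finset α}
    (h : ∀ t, #{i ∈ P | #(L i) ≤ t} ≤ t) :
    ∃ c : ι → α, Set.InjOn c P ∧ ∀ i ∈ P, c i ∈ L i := by
  classical
  have hall : ∀ F : Finset P, #F ≤ #(F.biUnion fun i ↦ L i) := by
    intro F
    refine (card_le_card_of_injOn Subtype.val (fun i hi ↦ ?_) Subtype.val_injective.injOn).trans
      (h #(F.biUnion fun i ↦ L i))
    simp only [coe_filter, Set.mem_ofPred_eq]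
    exact ⟨i.2, card_le_card (subset_biUnion_of_mem (fun i : P ↦ L i) hi)⟩
  obtain ⟨c, hinj, hmem⟩ := (all_card_le_biUnion_card_iff_exists_injective _).mp hall
  have hext (i : P) : Function.extend Subtype.val c (fun _ ↦ Classical.arbitrary α) i = c i :=
    Subtype.val_injective.extend_apply _ _ i
  refine ⟨_, fun i hi j hj hij ↦ ?_, fun i hi ↦ (hext ⟨i, hi⟩).symm ▸ hmem ⟨i, hi⟩⟩
  rw [hext ⟨i, hi⟩, hext ⟨j, hj⟩] at hij
  exact congrArg Subtype.val (hinj hij)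

end Hall

/-- The numbers of colours `k` for which cliques on `s + 1` vertices are treated by deleting
vertices: from the number of pairs in the clique up to the first `k` with
`k * (s - 1) / s ≥ (s + 1).choose 2 - 1`, from which on the Turán bound is the larger one for
every number of vertices. -/
structure ColourRange (s k : ℕ) : Prop where
  two_le : 2 ≤ s
  le_four : s ≤ 4
  choose_le : (s + 1).choose 2 ≤ k
  le_threshold : 2 * k ≤ s * (s + 2) + 1

/-- Hall's condition for a rainbow clique fails on every `r`-set, where `w e` is the number of
colours available at the pair `e`: for some `t`, more than `t` pairs have at most `t` colours. -/
def HallObstructed {V : Type*} [DecidableEq V] (w : Sym2 V → ℕ) (r : ℕ) : Prop :=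
  ∀ S : Finset V, #S = r → ∃ t, t < #{e ∈ pairs S | w e ≤ t}

/-- An `s`-set whose average weight per pair exceeds `(s + 1).choose 2 - 1`. -/
def IsRich {V : Type*} [DecidableEq V] (w : Sym2 V → ℕ) (s : ℕ) (T : Finset V) : Prop :=
  #T = s ∧ ((s + 1).choose 2 - 1) * s.choose 2 < ∑ e ∈ pairs T, w e

namespace ColourRange

variable {s k : ℕ}

lemma eq_or (h : ColourRange s k) :
    s = 2 ∧ (k = 3 ∨ k = 4) ∨ s = 3 ∧ (k = 6 ∨ k = 7 ∨ k = 8) ∨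
      s = 4 ∧ (k = 10 ∨ k = 11 ∨ k = 12) := by
  obtain ⟨h2, h4, hk, hk'⟩ := h
  interval_cases s <;> simp only [Nat.choose, Nat.reduceAdd] at hk <;> omega

lemma le (h : ColourRange s k) : s ≤ k := by
  rcases h.eq_or with h | h | h <;> omega

lemma add_le_of_deficit_lt (h : ColourRange s k) {t a b : ℕ} (ht : t < (s + 1).choose 2)
    (ha₀ : t ≤ 1 → a = 0) (hbs : b ≤ s)
    (ha : a * (k - t) < (k - ((s + 1).choose 2 - 1)) * s.choose 2) (hb : b * (k - t) < k) :
    a + b ≤ t := by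
  rcases h.eq_or with ⟨rfl, rfl | rfl⟩ | ⟨rfl, rfl | rfl | rfl⟩ | ⟨rfl, rfl | rfl | rfl⟩ <;>
    simp only [Nat.choose, Nat.reduceAdd, Nat.reduceSub, Nat.reduceMul] at ht ha <;>
    interval_cases t <;> omega

lemma two_thin_deficit (h : ColourRange s k) :
    (k - ((s + 1).choose 2 - 1)) * s.choose 2 ≤ 2 * (k - 1) := by
  rcases h.eq_or with ⟨rfl, rfl | rfl⟩ | ⟨rfl, rfl | rfl | rfl⟩ | ⟨rfl, rfl | rfl | rfl⟩ <;>
    decide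

end ColourRange

section Weights

variable {V : Type*} [DecidableEq V] {w : Sym2 V → ℕ} {s k : ℕ} {A T : Finset V} {x y : V}

lemma sum_pairs_le_mul (hwk : ∀ e, w e ≤ k) (A : Finset V) :
    ∑ e ∈ pairs A, w e ≤ k * (#A).choose 2 := by
  rw [mul_comm, ← card_pairs]
  exact sum_le_card_nsmul _ _ _ fun e _ ↦ hwk e

lemma card_filter_pairs_insert (w : Sym2 V → ℕ) (t : ℕ) (hx : x ∉ T) :
    #{e ∈ pairs (insert x T) | w e ≤ t} =
      #{e ∈ pairs T | w e ≤ t} + #{u ∈ T | w s(x, u) ≤ t} := by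
  simp only [card_filter, sum_pairs_insert _ hx]

lemma IsRich.card_filter_mul_lt (hT : IsRich w s T) (hwk : ∀ e, w e ≤ k) {t : ℕ} (ht : t ≤ k) :
    #{e ∈ pairs T | w e ≤ t} * (k - t) < (k - ((s + 1).choose 2 - 1)) * s.choose 2 := by
  have hsum := sum_add_card_filter_le_mul_le (P := pairs T) (fun e _ ↦ hwk e) ht
  rw [card_pairs, hT.1, mul_comm (s.choose 2)] at hsum
  rw [Nat.sub_mul]
  have := hT.2
  omega

lemma IsRich.sum_star_le (hT : IsRich w s T) (h : ColourRange s k) (hwk : ∀ e, w e ≤ k)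
    (hw : HallObstructed w (s + 1)) (hthick : ∀ e ∈ pairs T, 1 < w e) (hx : x ∉ T) :
    ∑ u ∈ T, w s(x, u) ≤ (s - 1) * k := by
  by_contra! hstar
  have hcard : #(insert x T) = s + 1 := by rw [card_insert_of_notMem hx, hT.1]
  obtain ⟨t, ht⟩ := hw _ hcard
  have htm : t < (s + 1).choose 2 := by
    rw [← hcard, ← card_pairs]
    exact ht.trans_le (card_filter_le _ _)
  have htk : t ≤ k := htm.le.trans h.choose_le
  have hthin : t ≤ 1 → #{e ∈ pairs T | w e ≤ t} = 0 := fun ht1 ↦ by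
    rw [card_eq_zero, filter_eq_empty_iff]
    exact fun e he ↦ by have := hthick e he; omega
  have hstar_deficit : #{u ∈ T | w s(x, u) ≤ t} * (k - t) < k := by
    have hsum := sum_add_card_filter_le_mul_le (P := T) (fun u _ ↦ hwk s(x, u)) htk
    have hs : s * k = (s - 1) * k + k := by
      rw [← Nat.succ_mul, Nat.succ_eq_add_one, Nat.sub_add_cancel (by linarith [h.two_le])]
    rw [hT.1] at hsum
    omega
  have := h.add_le_of_deficit_lt htm hthin ((card_filter_le _ _).trans hT.1.le)
    (hT.card_filter_mul_lt hwk htk) hstar_deficit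
  rw [card_filter_pairs_insert w t hx] at ht
  omega

lemma IsRich.card_thin_le_one (hT : IsRich w s T) (h : ColourRange s k) (hwk : ∀ e, w e ≤ k) :
    #{e ∈ pairs T | w e ≤ 1} ≤ 1 := by
  have hk : 1 ≤ k := by linarith [h.two_le, h.le]
  have hlt := (hT.card_filter_mul_lt hwk hk).trans_le h.two_thin_deficit
  have := Nat.lt_of_mul_lt_mul_right hlt
  omega

lemma IsRich.one_lt_of_mem_pairs_erase (hT : IsRich w s T) (h : ColourRange s k)
    (hwk : ∀ e, w e ≤ k) (hxy : s(x, y) ∈ pairs T) (hthin : w s(x, y) ≤ 1) {e : Sym2 V}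
    (he : e ∈ pairs (T.erase y)) : 1 < w e := by
  by_contra! hle
  have heq : e = s(x, y) := card_le_one.mp (hT.card_thin_le_one h hwk) e
    (mem_filter.mpr ⟨pairs_mono (erase_subset y T) he, hle⟩) _ (mem_filter.mpr ⟨hxy, hthin⟩)
  rw [heq, mk_mem_pairs] at he
  exact notMem_erase y T he.2.2

lemma IsRich.sum_star_erase_le (hT : IsRich w s T) (h : ColourRange s k) (hwk : ∀ e, w e ≤ k)
    (hTA : T ⊆ A) (hA : ∀ T' ⊆ A, IsRich w s T' → ∃ e ∈ pairs T', w e ≤ 1)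
    (hxy : s(x, y) ∈ pairs T) (hthin : w s(x, y) ≤ 1) {v : V} (hv : v ∈ A \ T.erase y) :
    ∑ u ∈ T.erase y, w s(v, u) ≤ (s - 2) * k + 1 := by
  obtain ⟨hne, hxT, hyT⟩ := mk_mem_pairs.mp hxy
  obtain ⟨hvA, hvT⟩ := mem_sdiff.mp hv
  have hcard : #(T.erase y) = s - 1 := by rw [card_erase_of_mem hyT, hT.1]
  have hstar_thin : ∀ z, ∀ u ∈ T.erase y, w s(z, u) ≤ 1 →
      ∑ u ∈ T.erase y, w s(z, u) ≤ (s - 2) * k + 1 := by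
    intro z u hu hzu
    have := sum_le_card_pred_mul_add (fun u _ ↦ hwk s(z, u)) hu
    rw [hcard, show s - 1 - 1 = s - 2 from rfl] at this
    omega
  by_contra! hlt
  have hrich : IsRich w s (insert v (T.erase y)) := by
    refine ⟨by rw [card_insert_of_notMem hvT, hcard, Nat.sub_add_cancel (by linarith [h.two_le])],
      hT.2.trans ?_⟩
    calc ∑ e ∈ pairs T, w e
        = ∑ e ∈ pairs (T.erase y), w e + ∑ u ∈ T.erase y, w s(y, u) := by
          rw [← sum_pairs_insert w (notMem_erase y T), insert_erase hyT]
      _ < ∑ e ∈ pairs (T.erase y), w e + ∑ u ∈ T.erase y, w s(v, u) := by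
          have hy := hstar_thin y x (mem_erase.mpr ⟨hne, hxT⟩) (by rwa [Sym2.eq_swap])
          omega
      _ = ∑ e ∈ pairs (insert v (T.erase y)), w e := (sum_pairs_insert w hvT).symm
  obtain ⟨e, he, hle⟩ := hA _ (insert_subset hvA ((erase_subset y T).trans hTA)) hrich
  rw [pairs_insert hvT, mem_union, mem_image] at he
  obtain he | ⟨u, hu, rfl⟩ := he
  · exact (hT.one_lt_of_mem_pairs_erase h hwk hxy hthin he).not_ge hle
  · exact (hstar_thin v u hu hle).not_gt hlt

lemma sum_pairs_le_of_sum_star_le {b : ℕ} (hwk : ∀ e, w e ≤ k) (hTA : T ⊆ A)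
    (hb : ∀ x ∈ A \ T, ∑ u ∈ T, w s(x, u) ≤ b) :
    ∑ e ∈ pairs A, w e ≤
      k * (#T).choose 2 + b * (#A - #T) + ∑ e ∈ pairs (A \ T), w e := by
  rw [← union_sdiff_of_subset hTA, sum_pairs_union w disjoint_sdiff,
    union_sdiff_of_subset hTA, ← card_sdiff_of_subset hTA, mul_comm b]
  gcongr
  · exact sum_pairs_le_mul hwk T
  · exact sum_le_card_nsmul _ _ _ hb

theorem sum_pairs_le_turanE (h : ColourRange s k) (hwk : ∀ e, w e ≤ k)
    (hw : HallObstructed w (s + 1)) {N : ℕ}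
    (hN : ∀ a ≤ N, ((s + 1).choose 2 - 1) * a.choose 2 ≤ k * turanE s a) (hAN : #A ≤ N) :
    ∑ e ∈ pairs A, w e ≤ k * turanE s #A := by
  have hs := h.two_le
  induction A using Finset.strongInduction with
  | H A ih =>
  have peel : ∀ T ⊆ A, ∀ b, 0 < #T → (∀ x ∈ A \ T, ∑ u ∈ T, w s(x, u) ≤ b) →
      ∑ e ∈ pairs A, w e ≤ k * (#T).choose 2 + b * (#A - #T) + k * turanE s (#A - #T) := by
    intro T hTA b hT hb
    refine (sum_pairs_le_of_sum_star_le hwk hTA hb).trans ?_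
    rw [← card_sdiff_of_subset hTA]
    gcongr
    exact ih _ (sdiff_ssubset hTA (card_pos.mp hT)) ((card_le_card sdiff_subset).trans hAN)
  rcases lt_or_ge #A s with hlt | hsA
  · rw [turanE_of_le hlt.le]
    exact sum_pairs_le_mul hwk A
  by_cases hthick : ∃ T ⊆ A, IsRich w s T ∧ ∀ e ∈ pairs T, 1 < w e
  · obtain ⟨T, hTA, hT, hT'⟩ := hthick
    have hpeel := peel T hTA ((s - 1) * k) (by have := hT.1; omega) fun x hx ↦
      hT.sum_star_le h hwk hw hT' (mem_sdiff.mp hx).2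
    have hturan := mul_turanE_add k s (#A - s)
    rw [Nat.sub_add_cancel hsA] at hturan
    rw [hT.1] at hpeel
    exact hturan ▸ hpeel
  push Not at hthick
  by_cases hrich : ∃ T ⊆ A, IsRich w s T
  · obtain ⟨T, hTA, hT⟩ := hrich
    obtain ⟨⟨x, y⟩, hxy, hthin⟩ := hthick T hTA hT
    have hcard : #(T.erase y) = s - 1 := by
      rw [card_erase_of_mem (mk_mem_pairs.mp hxy).2.2, hT.1]
    have hpeel := peel (T.erase y) ((erase_subset y T).trans hTA) ((s - 2) * k + 1) (by omega)
      fun v hv ↦ hT.sum_star_erase_le h hwk hTA hthick hxy hthin hv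
    have hturan := le_mul_turanE_add_pred hs h.le (#A - (s - 1))
    rw [Nat.sub_add_cancel (by omega)] at hturan
    exact (hcard ▸ hpeel).trans hturan
  · push Not at hrich
    refine (sum_pairs_le_of_forall_powersetCard hs hsA fun S hS ↦ ?_).trans (hN _ hAN)
    obtain ⟨hSA, hScard⟩ := mem_powersetCard.mp hS
    exact not_lt.mp fun hlt ↦ hrich S hSA ⟨hScard, hlt⟩

end Weights

section Threshold

variable {s k : ℕ}

lemma choose_two_le_turanE (hs : 0 < s) (hk : s * (s + 2) ≤ 2 * k) (n : ℕ) :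
    ((s + 1).choose 2 - 1) * n.choose 2 ≤ k * turanE s n := by
  obtain ⟨j, rfl⟩ := Nat.exists_eq_add_of_le' hs
  have hc : 2 * ((j + 1 + 1).choose 2 - 1) = j * (j + 3) := by
    have hchoose : 2 * (j + 2).choose 2 = (j + 1) * (j + 2) := by
      rw [Nat.choose_two_right, Nat.mul_div_cancel' (Nat.even_mul_pred_self _).two_dvd, mul_comm]
      rfl
    rw [Nat.mul_sub, hchoose, Nat.sub_eq_iff_eq_add (by nlinarith)]
    ring
  have hturan := pred_mul_choose_two_le hs n
  rw [Nat.add_sub_cancel] at hturan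
  refine Nat.le_of_mul_le_mul_left (c := 2) ?_ two_pos
  calc 2 * (((j + 1 + 1).choose 2 - 1) * n.choose 2) = (j + 3) * (j * n.choose 2) := by
        rw [← mul_assoc, hc]
        ring
    _ ≤ (j + 3) * ((j + 1) * turanE (j + 1) n) := by gcongr
    _ = (j + 1) * (j + 1 + 2) * turanE (j + 1) n := by ring
    _ ≤ 2 * (k * turanE (j + 1) n) := by
        rw [← mul_assoc]
        gcongr

lemma ColourRange.exists_threshold (hs₂ : 2 ≤ s) (hs₄ : s ≤ 4) :
    ∃ k₀, ColourRange s k₀ ∧ s * (s + 2) ≤ 2 * k₀ := by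
  refine ⟨(s * (s + 2) + 1) / 2, ⟨hs₂, hs₄, ?_, by omega⟩, by omega⟩
  interval_cases s <;> decide

lemma ColourRange.exists_crossing (h : ColourRange s k) (hk : 2 * k < s * (s + 2)) :
    ∃ N ≥ 2, (∀ a ≤ N, ((s + 1).choose 2 - 1) * a.choose 2 ≤ k * turanE s a) ∧
      k * turanE s N = ((s + 1).choose 2 - 1) * N.choose 2 := by
  simp only [turanE, card_edgeFinset_turanGraph]
  rcases h.eq_or with ⟨rfl, rfl | rfl⟩ | ⟨rfl, rfl | rfl | rfl⟩ | ⟨rfl, rfl | rfl | rfl⟩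
  · exact ⟨3, by decide⟩
  · contradiction
  · exact ⟨4, by decide⟩
  · exact ⟨15, by decide⟩
  · contradiction
  · exact ⟨5, by decide⟩
  · exact ⟨12, by decide⟩
  · contradiction

theorem sum_pairs_le_max {V : Type*} [DecidableEq V] {w : Sym2 V → ℕ} (h : ColourRange s k)
    (hwk : ∀ e, w e ≤ k) (hw : HallObstructed w (s + 1)) (A : Finset V) :
    ∑ e ∈ pairs A, w e ≤
      max (((s + 1).choose 2 - 1) * (#A).choose 2) (k * turanE s #A) := by
  have hs := h.two_le
  rcases le_or_gt (s * (s + 2)) (2 * k) with hk | hk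
  · exact le_max_of_le_right <| sum_pairs_le_turanE h hwk hw
      (fun a _ ↦ choose_two_le_turanE (by omega) hk a) le_rfl
  obtain ⟨N, hN2, hN, hNeq⟩ := h.exists_crossing hk
  rcases le_or_gt #A N with hA | hA
  · exact le_max_of_le_right (sum_pairs_le_turanE h hwk hw hN hA)
  · refine le_max_of_le_left (sum_pairs_le_of_forall_powersetCard hN2 hA.le fun S hS ↦ ?_)
    have hS := (mem_powersetCard.mp hS).2
    rw [← hNeq, ← hS]
    exact sum_pairs_le_turanE h hwk hw hN hS.le

end Threshold

section Families

variable {n k r : ℕ} {G : Fin k → SimpleGraph (Fin n)}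

open Classical in
/-- The indices of the graphs of the family that contain the pair `e`. -/
noncomputable def colours (G : Fin k → SimpleGraph (Fin n)) (e : Sym2 (Fin n)) : Finset (Fin k) :=
  {i | e ∈ (G i).edgeSet}

lemma mem_colours {e : Sym2 (Fin n)} {i : Fin k} : i ∈ colours G e ↔ e ∈ (G i).edgeSet := by
  simp [colours]

lemma card_colours_le (G : Fin k → SimpleGraph (Fin n)) (e : Sym2 (Fin n)) :
    #(colours G e) ≤ k :=
  card_finset_fin_le _

lemma sum_card_colours (G : Fin k → SimpleGraph (Fin n)) :
    ∑ e ∈ pairs univ, #(colours G e) = ∑ i, (G i).edgeSet.ncard := by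
  classical
  refine (sum_card_bipartiteAbove_eq_sum_card_bipartiteBelow
    (fun e i ↦ e ∈ (G i).edgeSet)).trans (sum_congr rfl fun i _ ↦ ?_)
  rw [← Set.ncard_coe_finset, coe_bipartiteBelow]
  congr 1
  ext e
  simpa [mem_pairs] using fun he ↦ (G i).not_isDiag_of_mem_edgeSet he

lemma RainbowCliqueFree.hallObstructed (hk : 0 < k) (hG : RainbowCliqueFree n k r G) :
    HallObstructed (fun e ↦ #(colours G e)) r := by
  intro S hS
  by_contra! hall
  have : Nonempty (Fin k) := ⟨0, hk⟩
  obtain ⟨c, hinj, hmem⟩ := exists_injOn_mem_of_card_filter_le hall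
  refine hG ⟨S, c, hS, hinj.mono fun e he ↦ mem_pairs.mpr he, fun u hu v hv huv ↦ ?_⟩
  exact mem_colours.mp (hmem _ (mk_mem_pairs.mpr ⟨huv, hu, hv⟩))

theorem RainbowCliqueFree.sum_ncard_edgeSet_le_max {s : ℕ} (hsk : ColourRange s k)
    (hG : RainbowCliqueFree n k (s + 1) G) :
    ∑ i, (G i).edgeSet.ncard ≤
      max (((s + 1).choose 2 - 1) * n.choose 2) (k * turanE s n) := by
  have hk : 0 < k := by linarith [hsk.two_le, hsk.le]
  simpa [sum_card_colours] using
    sum_pairs_le_max hsk (card_colours_le G) (hG.hallObstructed hk) univ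

lemma RainbowCliqueFree.comp_injective {l : ℕ} (hG : RainbowCliqueFree n k r G)
    {f : Fin l → Fin k} (hf : f.Injective) : RainbowCliqueFree n l r (G ∘ f) := by
  rintro ⟨S, c, hS, hc, hadj⟩
  exact hG ⟨S, f ∘ c, hS, hf.comp_injOn hc, hadj⟩

lemma sum_ncard_edgeSet_le_of_le {k₀ t : ℕ} (hk₀ : 0 < k₀)
    (h : ∀ G : Fin k₀ → SimpleGraph (Fin n), RainbowCliqueFree n k₀ r G →
      ∑ i, (G i).edgeSet.ncard ≤ k₀ * t) (hk : k₀ ≤ k) (hG : RainbowCliqueFree n k r G) :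
    ∑ i, (G i).edgeSet.ncard ≤ k * t := by
  induction k, hk using Nat.le_induction with
  | base => exact h G hG
  | succ k hk ih =>
    refine Nat.le_of_mul_le_mul_left (c := k) ?_ (hk₀.trans_le hk)
    have hdelete (j : Fin (k + 1)) :
        ∑ i, (G i).edgeSet.ncard ≤ (G j).edgeSet.ncard + k * t := by
      rw [Fin.sum_univ_succAbove _ j]
      gcongr
      exact ih (hG.comp_injective Fin.succAbove_right_injective)
    have hsum := sum_le_sum fun j (_ : j ∈ univ) ↦ hdelete j
    simp only [sum_const, sum_add_distrib, card_univ, Fintype.card_fin, smul_eq_mul] at hsum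
    nlinarith

end Families

theorem rainbow_turan_r45_general {r n k : ℕ} (hr₃ : 3 ≤ r) (hr₅ : r ≤ 5) (hk : r.choose 2 ≤ k)
    {G : Fin k → SimpleGraph (Fin n)} (hG : RainbowCliqueFree n k r G) :
    ∑ i, (G i).edgeSet.ncard ≤
      max ((r.choose 2 - 1) * n.choose 2) (k * turanE (r - 1) n) := by
  obtain ⟨s, rfl⟩ := Nat.exists_eq_add_of_le' (by omega : 1 ≤ r)
  rw [Nat.add_sub_cancel]
  rcases le_or_gt (2 * k) (s * (s + 2) + 1) with hle | hlt
  · exact hG.sum_ncard_edgeSet_le_max ⟨by omega, by omega, hk, hle⟩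
  obtain ⟨k₀, hk₀, hk₀s⟩ := ColourRange.exists_threshold (by omega : 2 ≤ s) (by omega)
  have hk₀k : k₀ ≤ k := by linarith [hk₀.le_threshold]
  refine le_max_of_le_right (sum_ncard_edgeSet_le_of_le (by linarith [hk₀.two_le, hk₀.le])
    (fun G' hG' ↦ ?_) hk₀k hG)
  exact (hG'.sum_ncard_edgeSet_le_max hk₀).trans
    (max_le (choose_two_le_turanE (by omega) hk₀s n) le_rfl)

/-- If `r ∈ {4,5}`, `n ≥ r−1`, `k ≥ C(r,2)` and `(G_1, …, G_k)` is rainbow `K_r`-free, then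
`Σ_i |E(G_i)| ≤ max{(C(r,2)−1)·C(n,2), k·t_{r−1}(n)}`. -/
theorem rainbow_turan_r45 (r n k : ℕ) (hr : r = 4 ∨ r = 5)
    (hn : r - 1 ≤ n) (hk : r.choose 2 ≤ k)
    (G : Fin k → SimpleGraph (Fin n)) (hG : RainbowCliqueFree n k r G) :
    ∑ i, (G i).edgeSet.ncard ≤
      max ((r.choose 2 - 1) * n.choose 2) (k * turanE (r - 1) n) :=
  rainbow_turan_r45_general (by omega) (by omega) hk hG
end

section
/- Let r ∈ {4,5} and n ≥ r be integers, set k_2 = ⌈(C(r,2)−1)·C(n,2) / t_{r−1}(n)⌉ and k_1 = k_2 − 1. Let f be a k_1-weighting on the complete graph K_n on vertex set [n] such that no r-clique of K_n has weight sequence bound (1, 2, …, C(r,2)). Then Σ_e f(e) ≤ (C(r,2) − 1)·C(n,2). -/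
open Finset SimpleGraph

/-- The `r`-clique `S` has weight sequence bound `(1, 2, …, C(r,2))` w.r.t. `f`. -/
def HasWSB (n r : ℕ) (f : Sym2 (Fin n) → ℕ) (S : Finset (Fin n)) : Prop :=
  ∃ g : Fin (r.choose 2) → Sym2 (Fin n),
    Function.Injective g ∧
    (∀ i, ¬ (g i).IsDiag ∧ ∀ v ∈ g i, v ∈ S) ∧
    ∀ i : Fin (r.choose 2), (i : ℕ) + 1 ≤ f (g i)

/-- `k₂ = ⌈(C(r,2)−1)·C(n,2) / t_{r−1}(n)⌉`. -/
def kTwo (r n : ℕ) : ℕ :=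
  ⌈(((r.choose 2 - 1) * n.choose 2 : ℕ) : ℚ) / ((turanE (r - 1) n : ℕ) : ℚ)⌉₊

/-!
If the values of `f` on an `m`-element set cannot be listed above `1, …, m`, then some `j + 1` of
them are at most `j`. This bounds their sum by `(m - 1) m` as soon as all values lie in `[0, m]`, or
all lie in `[1, m + 1]`. Averaging over the `r`-cliques, where `m = C(r,2)`, settles these ranges.

What remains is `k₁ = C(r,2) + 1` with `n` large. If the shifted weighting `f - (r - 1)` dominates
`1, …, C(r-1,2)` on an `(r - 1)`-clique `T`, then no star from an outside vertex to `T` dominates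
`1, …, r - 1`; hence the stars are light and removing `T` loses no more weight than the step
`n ↦ n - (r - 1)` of the Turán number `t_{r-1}` allows. If no such `T` exists, then `f - (r - 1)` is
itself free of a staircase `(r - 1)`-clique, which forces small weight. Carried out on `14` vertices
for `r = 4` and on `13` vertices for `r = 5`, this gives the bound there, and averaging extends it
to all larger `n`.
-/

section Staircase

variable {α : Type*} {f : α → ℕ} {E : Finset α}

/-- The elements of `E` can be listed as `e₁, …, eₘ` with `f eᵢ ≥ i` for all `i`. This is encoded
by its counting form; `HasStaircase.exists_enumeration` recovers the list. -/
def HasStaircase (f : α → ℕ) (E : Finset α) : Prop :=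
  ∀ j, #{e ∈ E | f e ≤ j} ≤ j

theorem HasStaircase.exists_enumeration (h : HasStaircase f E) :
    ∃ g : Fin #E → α, Function.Injective g ∧ ∀ i, g i ∈ E ∧ (i : ℕ) < f (g i) := by
  let w : Fin #E → ℕ := fun i => f (E.equivFin.symm i)
  let g : Fin #E → α := fun i => E.equivFin.symm (Tuple.sort w i)
  have g_injective : Function.Injective g :=
    Subtype.val_injective.comp (E.equivFin.symm.injective.comp (Tuple.sort w).injective)
  have f_g_monotone : Monotone fun i => f (g i) := Tuple.monotone_sort w
  refine ⟨g, g_injective, fun i => ⟨Subtype.property _, ?_⟩⟩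
  by_contra! hi
  have : (Iic i).map ⟨g, g_injective⟩ ⊆ {e ∈ E | f e ≤ i} := by
    intro e he
    obtain ⟨i', hi', rfl⟩ := mem_map.1 he
    exact mem_filter.2 ⟨Subtype.property _, (f_g_monotone (mem_Iic.1 hi')).trans hi⟩
  have := (card_le_card this).trans (h i)
  rw [card_map, Fin.card_Iic] at this
  omega

theorem hasStaircase_singleton {e : α} (he : 0 < f e) : HasStaircase f {e} := fun j => by
  rw [filter_singleton]
  split_ifs with hj
  · rw [card_singleton]; omega
  · simp

theorem exists_sum_le_of_not_hasStaircase {k : ℕ} (h : ¬HasStaircase f E)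
    (hk : ∀ e ∈ E, f e ≤ k) :
    ∃ j < #E, (∃ e ∈ E, f e ≤ j) ∧ ∑ e ∈ E, f e ≤ (j + 1) * j + (#E - (j + 1)) * k := by
  classical
  simp only [HasStaircase, not_forall, not_le] at h
  obtain ⟨j, hj⟩ := h
  obtain ⟨L, hL, hLcard⟩ := exists_subset_card_eq (Nat.succ_le_of_lt hj)
  have hLE : L ⊆ E := hL.trans (filter_subset ..)
  have low (e) (he : e ∈ L) : f e ≤ j := (mem_filter.1 (hL he)).2
  obtain ⟨e, he⟩ : L.Nonempty := card_pos.1 (by omega)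
  refine ⟨j, by have := card_le_card hLE; omega, ⟨e, hLE he, low e he⟩, ?_⟩
  calc ∑ e ∈ E, f e = ∑ e ∈ L, f e + ∑ e ∈ E \ L, f e := by rw [add_comm, sum_sdiff hLE]
    _ ≤ #L * j + #(E \ L) * k :=
      Nat.add_le_add (sum_le_card_nsmul L f j low)
        (sum_le_card_nsmul (E \ L) f k fun e he => hk e (mem_sdiff.1 he).1)
    _ = (j + 1) * j + (#E - (j + 1)) * k := by rw [card_sdiff_of_subset hLE, hLcard]

theorem sum_le_of_not_hasStaircase {k : ℕ} (h : ¬HasStaircase f E) (hk : ∀ e ∈ E, f e ≤ k)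
    (hE : #E ≤ k) : ∑ e ∈ E, f e ≤ (#E - 1) * k := by
  obtain ⟨j, hj, -, hsum⟩ := exists_sum_le_of_not_hasStaircase h hk
  obtain ⟨i, hi⟩ := Nat.exists_eq_add_of_lt hj
  rw [hi, show j + i + 1 - (j + 1) = i by omega] at hsum
  rw [hi, Nat.add_sub_cancel]
  nlinarith

theorem sum_le_of_not_hasStaircase_of_pos (h : ¬HasStaircase f E) (hpos : ∀ e ∈ E, 0 < f e)
    (hE : ∀ e ∈ E, f e ≤ #E + 1) : ∑ e ∈ E, f e ≤ (#E - 1) * #E := by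
  obtain ⟨j, hj, ⟨e, he, hej⟩, hsum⟩ := exists_sum_le_of_not_hasStaircase h hE
  obtain ⟨i, hi⟩ := Nat.exists_eq_add_of_lt hj
  have j_pos : 1 ≤ j := (hpos e he).trans_le hej
  rw [hi, show j + i + 1 - (j + 1) = i by omega] at hsum
  rw [hi, Nat.add_sub_cancel]
  nlinarith

variable [DecidableEq α] {A B : Finset α}

theorem HasStaircase.union (hA : HasStaircase f A) (hB : HasStaircase (fun e => f e - #A) B) :
    HasStaircase f (A ∪ B) := by
  intro j
  have A_le : #{e ∈ A | f e ≤ j} ≤ #A := card_filter_le ..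
  have B_le : #{e ∈ B | f e ≤ j} ≤ j - #A :=
    (card_le_card (monotone_filter_right B fun e _ (he : f e ≤ j) =>
      Nat.sub_le_sub_right he #A)).trans (hB (j - #A))
  have union_le : #{e ∈ A ∪ B | f e ≤ j} ≤ #{e ∈ A | f e ≤ j} + #{e ∈ B | f e ≤ j} := by
    rw [filter_union]
    exact card_union_le ..
  have := hA j
  omega

theorem HasStaircase.insert {e : α} (hA : HasStaircase f A) (he : #A < f e) :
    HasStaircase f (insert e A) := by
  rw [insert_eq, union_comm]
  exact hA.union (hasStaircase_singleton (Nat.sub_pos_of_lt he))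

end Staircase

section Weight

variable {V : Type*} [DecidableEq V] {f : Sym2 V → ℕ} {s t T R : Finset V} {c k r : ℕ}

/-- The edges of the complete graph on the vertex set `s`. -/
def cliqueEdges (s : Finset V) : Finset (Sym2 V) := {e ∈ s.sym2 | ¬e.IsDiag}

theorem mem_cliqueEdges {e : Sym2 V} : e ∈ cliqueEdges s ↔ (∀ x ∈ e, x ∈ s) ∧ ¬e.IsDiag := by
  rw [cliqueEdges, mem_filter, mem_sym2_iff]

theorem mk_mem_cliqueEdges {x y : V} : s(x, y) ∈ cliqueEdges s ↔ (x ∈ s ∧ y ∈ s) ∧ x ≠ y := by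
  rw [cliqueEdges, mem_filter, mk_mem_sym2_iff, Sym2.mk_isDiag_iff]

theorem cliqueEdges_mono (h : s ⊆ t) : cliqueEdges s ⊆ cliqueEdges t :=
  filter_subset_filter _ (sym2_mono h)

theorem card_cliqueEdges (s : Finset V) : #(cliqueEdges s) = (#s).choose 2 := by
  rw [cliqueEdges, sym2_eq_image, ← Sym2.card_image_offDiag, ← Sym2.filter_image_mk_not_isDiag]

theorem cliqueEdges_insert {x : V} (hx : x ∉ s) :
    cliqueEdges (insert x s) = s.image (fun y => s(x, y)) ∪ cliqueEdges s := by
  ext e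
  induction e with
  | _ a b =>
    simp only [mem_union, mem_image, mk_mem_cliqueEdges, mem_insert, Sym2.eq_iff]
    grind

theorem cliqueEdges_pair {u v : V} (h : u ≠ v) : cliqueEdges {u, v} = {s(u, v)} := by
  rw [cliqueEdges_insert (by simpa using h)]
  simp [cliqueEdges, filter_singleton, Sym2.diag]

theorem cliqueEdges_univ [Fintype V] :
    cliqueEdges (univ : Finset V) = (⊤ : SimpleGraph V).edgeFinset := by
  ext e
  simp [mem_cliqueEdges]

/-- The total weight `∑ f e` of the edges inside `s`. -/
def weight (f : Sym2 V → ℕ) (s : Finset V) : ℕ := ∑ e ∈ cliqueEdges s, f e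

theorem weight_le_mul_choose (hc : ∀ e ∈ cliqueEdges s, f e ≤ c) :
    weight f s ≤ c * (#s).choose 2 := by
  rw [mul_comm, ← card_cliqueEdges]
  exact sum_le_card_nsmul _ f c hc

theorem weight_le_weight_tsub_add (f : Sym2 V → ℕ) (s : Finset V) (c : ℕ) :
    weight f s ≤ weight (fun e => f e - c) s + c * (#s).choose 2 := by
  rw [mul_comm, ← card_cliqueEdges, ← smul_eq_mul, weight, weight, ← sum_const, ← sum_add_distrib]
  exact sum_le_sum fun e _ => by omega

theorem weight_add_le_weight_tsub_add {e : Sym2 V} (he : e ∈ cliqueEdges s) (hfe : f e = 0) :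
    weight f s + c ≤ weight (fun e => f e - c) s + c * (#s).choose 2 := by
  rw [mul_comm, ← card_cliqueEdges, ← smul_eq_mul, weight, weight, ← sum_const, ← sum_add_distrib,
    ← add_sum_erase _ _ he, ← add_sum_erase _ _ he, hfe]
  have : ∑ e ∈ (cliqueEdges s).erase e, f e ≤ ∑ e ∈ (cliqueEdges s).erase e, (f e - c + c) :=
    sum_le_sum fun e _ => by omega
  omega

theorem weight_insert (f : Sym2 V → ℕ) {x : V} (hx : x ∉ s) :
    weight f (insert x s) = ∑ y ∈ s, f s(x, y) + weight f s := by
  have star_disjoint : Disjoint (s.image fun y => s(x, y)) (cliqueEdges s) := by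
    rw [Finset.disjoint_left]
    rintro e he hes
    obtain ⟨y, -, rfl⟩ := mem_image.1 he
    exact hx (mk_mem_cliqueEdges.1 hes).1.1
  rw [weight, cliqueEdges_insert hx, sum_union star_disjoint,
    sum_image fun y _ z _ h => Sym2.congr_right.1 h, weight]

theorem weight_union (f : Sym2 V → ℕ) (h : Disjoint R T) :
    weight f (R ∪ T) = weight f R + weight f T + ∑ x ∈ R, ∑ y ∈ T, f s(x, y) := by
  induction R using Finset.induction_on with
  | empty => simp [weight, cliqueEdges]
  | insert x R hx ih =>
    obtain ⟨hxT, hRT⟩ := disjoint_insert_left.1 h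
    rw [insert_union, weight_insert f (by simp [hx, hxT]), sum_union hRT, ih hRT,
      weight_insert f hx, sum_insert hx]
    ring

theorem weight_eq_weight_sdiff_add (f : Sym2 V → ℕ) (h : T ⊆ s) :
    weight f s = weight f (s \ T) + weight f T + ∑ x ∈ s \ T, ∑ y ∈ T, f s(x, y) := by
  rw [← weight_union f sdiff_disjoint, sdiff_union_of_subset h]

theorem weight_eq_weight_sdiff_pair_add (f : Sym2 V → ℕ) {u v : V}
    (h : s(u, v) ∈ cliqueEdges s) : weight f s =
      weight f (s \ {u, v}) + f s(u, v) + ∑ x ∈ s \ {u, v}, (f s(x, u) + f s(x, v)) := by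
  obtain ⟨⟨hu, hv⟩, hne⟩ := mk_mem_cliqueEdges.1 h
  rw [weight_eq_weight_sdiff_add f (insert_subset hu (singleton_subset_iff.2 hv)),
    weight.eq_1 f {u, v}, cliqueEdges_pair hne, sum_singleton]
  simp only [sum_pair hne]

theorem sum_weight_erase (f : Sym2 V → ℕ) (s : Finset V) :
    ∑ x ∈ s, weight f (s.erase x) = (#s - 2) * weight f s := by
  have erase_iff (x) (e : Sym2 V) :
      x ∈ s ∧ e ∈ cliqueEdges (s.erase x) ↔ x ∈ {x ∈ s | x ∉ e} ∧ e ∈ cliqueEdges s := by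
    simp only [mem_cliqueEdges, mem_erase, mem_filter]
    grind
  have card_avoiding (e) (he : e ∈ cliqueEdges s) : #{x ∈ s | x ∉ e} = #s - 2 := by
    induction e with
    | _ a b =>
      obtain ⟨⟨ha, hb⟩, hab⟩ := mk_mem_cliqueEdges.1 he
      have : {x ∈ s | x ∉ s(a, b)} = s \ {a, b} := by ext; simp
      rw [this, card_sdiff_of_subset (by grind), card_pair hab]
  simp only [weight]
  rw [sum_comm' erase_iff, mul_sum]
  exact sum_congr rfl fun e he => by rw [sum_const, card_avoiding e he, smul_eq_mul]

theorem weight_le_of_forall_card_eq (hk : 2 ≤ k) (hks : k ≤ #s)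
    (h : ∀ T ⊆ s, #T = k → weight f T ≤ c * k.choose 2) : weight f s ≤ c * (#s).choose 2 := by
  obtain ⟨n, hn⟩ : ∃ n, #s = n := ⟨_, rfl⟩
  rw [hn] at hks ⊢
  induction n, hks using Nat.le_induction generalizing s with
  | base => exact h s subset_rfl hn
  | succ n hkn ih =>
    have erase_le (x) (hx : x ∈ s) : weight f (s.erase x) ≤ c * n.choose 2 :=
      ih (fun T hT => h T (hT.trans (erase_subset x s))) (by rw [card_erase_of_mem hx]; omega)
    have : (n + 1 - 2) * weight f s ≤ (n + 1 - 2) * (c * (n + 1).choose 2) :=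
      calc (n + 1 - 2) * weight f s = ∑ x ∈ s, weight f (s.erase x) := by
            rw [sum_weight_erase, hn]
        _ ≤ (n + 1) * (c * n.choose 2) := by
            rw [← hn]; exact sum_le_card_nsmul s _ _ erase_le
        _ = c * (n.choose 2 * (n + 1)) := by ring
        _ = (n + 1 - 2) * (c * (n + 1).choose 2) := by rw [Nat.choose_mul_succ_eq]; ring
    exact Nat.le_of_mul_le_mul_left this (by omega)

/-- No `r`-element subset of `s` spans a clique whose edge weights dominate `1, 2, …, C(r,2)`. -/
def StaircaseFree (f : Sym2 V → ℕ) (r : ℕ) (s : Finset V) : Prop :=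
  ∀ S ⊆ s, #S = r → ¬HasStaircase f (cliqueEdges S)

theorem StaircaseFree.mono (h : StaircaseFree f r t) (hst : s ⊆ t) : StaircaseFree f r s :=
  fun S hS => h S (hS.trans hst)

theorem StaircaseFree.weight_le_of_le_choose (h : StaircaseFree f r s) (hr : 2 ≤ r)
    (hrs : r ≤ #s) (hf : ∀ e ∈ cliqueEdges s, f e ≤ r.choose 2) :
    weight f s ≤ (r.choose 2 - 1) * (#s).choose 2 := by
  refine weight_le_of_forall_card_eq hr hrs fun S hS hcard => ?_
  have card_edges : #(cliqueEdges S) = r.choose 2 := by rw [card_cliqueEdges, hcard]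
  have := sum_le_of_not_hasStaircase (h S hS hcard) (fun e he => hf e (cliqueEdges_mono hS he))
    card_edges.le
  rwa [card_edges] at this

theorem StaircaseFree.weight_le_of_pos (h : StaircaseFree f r s) (hr : 2 ≤ r) (hrs : r ≤ #s)
    (hpos : ∀ e ∈ cliqueEdges s, 0 < f e) (hf : ∀ e ∈ cliqueEdges s, f e ≤ r.choose 2 + 1) :
    weight f s ≤ (r.choose 2 - 1) * (#s).choose 2 := by
  refine weight_le_of_forall_card_eq hr hrs fun S hS hcard => ?_
  have card_edges : #(cliqueEdges S) = r.choose 2 := by rw [card_cliqueEdges, hcard]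
  have := sum_le_of_not_hasStaircase_of_pos (h S hS hcard)
    (fun e he => hpos e (cliqueEdges_mono hS he))
    (fun e he => card_edges ▸ hf e (cliqueEdges_mono hS he))
  rwa [card_edges] at this

theorem StaircaseFree.sum_star_le (h : StaircaseFree f (r + 1) s) (hTs : T ⊆ s) (hTr : #T = r)
    (hT : HasStaircase (fun e => f e - r) (cliqueEdges T)) (hk : ∀ e ∈ cliqueEdges s, f e ≤ k)
    (hrk : r ≤ k) {x : V} (hx : x ∈ s \ T) : ∑ y ∈ T, f s(x, y) ≤ (r - 1) * k := by
  obtain ⟨hxs, hxT⟩ := mem_sdiff.1 hx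
  have star_injective : Function.Injective fun y => s(x, y) := fun y z h => Sym2.congr_right.1 h
  have card_star : #(T.image fun y => s(x, y)) = r := by
    rw [card_image_of_injective T star_injective, hTr]
  have hxTs : insert x T ⊆ s := insert_subset hxs hTs
  have not_hasStaircase_star : ¬HasStaircase f (T.image fun y => s(x, y)) := by
    intro hstar
    refine h (insert x T) hxTs (by rw [card_insert_of_notMem hxT, hTr]) ?_
    rw [cliqueEdges_insert hxT]
    exact hstar.union (by rwa [card_star])
  have star_le (e) (he : e ∈ T.image fun y => s(x, y)) : f e ≤ k :=
    hk e (cliqueEdges_mono hxTs (cliqueEdges_insert hxT ▸ mem_union_left _ he))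
  have := sum_le_of_not_hasStaircase not_hasStaircase_star star_le (card_star.trans_le hrk)
  rwa [card_star, sum_image star_injective.injOn] at this

theorem StaircaseFree.weight_le_weight_sdiff_add (h : StaircaseFree f (r + 1) s) (hTs : T ⊆ s)
    (hTr : #T = r) (hT : HasStaircase (fun e => f e - r) (cliqueEdges T))
    (hk : ∀ e ∈ cliqueEdges s, f e ≤ k) (hrk : r ≤ k) :
    weight f s ≤ weight f (s \ T) + k * (r.choose 2 + #(s \ T) * (r - 1)) := by
  have weight_T : weight f T ≤ k * r.choose 2 :=
    hTr ▸ weight_le_mul_choose fun e he => hk e (cliqueEdges_mono hTs he)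
  have stars : ∑ x ∈ s \ T, ∑ y ∈ T, f s(x, y) ≤ #(s \ T) * ((r - 1) * k) :=
    sum_le_card_nsmul _ _ _ fun x hx => h.sum_star_le hTs hTr hT hk hrk hx
  rw [weight_eq_weight_sdiff_add f hTs]
  linarith

theorem StaircaseFree.tsub_or_exists_weight_le (h : StaircaseFree f (r + 1) s)
    (hk : ∀ e ∈ cliqueEdges s, f e ≤ k) (hrk : r ≤ k) :
    StaircaseFree (fun e => f e - r) r s ∨
      ∃ T ⊆ s, #T = r ∧ weight f s ≤ weight f (s \ T) + k * (r.choose 2 + #(s \ T) * (r - 1)) := by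
  by_cases! hfree : StaircaseFree (fun e => f e - r) r s
  · exact .inl hfree
  · simp only [StaircaseFree, not_forall, not_not] at hfree
    obtain ⟨T, hTs, hTr, hT⟩ := hfree
    exact .inr ⟨T, hTs, hTr, h.weight_le_weight_sdiff_add hTs hTr hT hk hrk⟩

end Weight

section Turan

theorem turanE_eq (t n : ℕ) :
    turanE t n = (n ^ 2 - (n % t) ^ 2) * (t - 1) / (2 * t) + (n % t).choose 2 :=
  card_edgeFinset_turanGraph

theorem turanE_add_self (t n : ℕ) :
    turanE t (n + t) = turanE t n + n * (t - 1) + t.choose 2 :=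
  card_edgeFinset_turanGraph_add

theorem add_choose_two (m n : ℕ) : (m + n).choose 2 = m.choose 2 + m * n + n.choose 2 := by
  induction n with
  | zero => simp
  | succ n ih =>
    rw [← add_assoc, Nat.choose_succ_succ' (m + n), ih, Nat.choose_succ_succ' n,
      Nat.choose_one_right, Nat.choose_one_right]
    ring

theorem pred_mul_choose_two_le_mul_turanE (t n : ℕ) : (t - 1) * n.choose 2 ≤ t * turanE t n := by
  induction n using Nat.strong_induction_on with
  | _ n ih =>
    obtain hnt | hnt := lt_or_ge n t
    · have : turanE t n = n.choose 2 := by simp [turanE_eq, Nat.mod_eq_of_lt hnt]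
      rw [this]
      exact Nat.mul_le_mul_right _ (Nat.sub_le t 1)
    · obtain ⟨m, rfl⟩ := Nat.exists_eq_add_of_le' hnt
      obtain - | p := t
      · simp
      have := ih m (by omega)
      rw [add_choose_two, turanE_add_self]
      rw [Nat.add_sub_cancel] at this ⊢
      nlinarith

theorem kTwo_le {r n K : ℕ} (h : (r.choose 2 - 1) * n.choose 2 ≤ K * turanE (r - 1) n) :
    kTwo r n ≤ K :=
  Nat.ceil_le.2 <| div_le_of_le_mul₀ (Nat.cast_nonneg _) (Nat.cast_nonneg _) (mod_cast h)

theorem kTwo_four_le (n : ℕ) : kTwo 4 n ≤ 8 := by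
  have := pred_mul_choose_two_le_mul_turanE 3 n
  exact kTwo_le (show 5 * n.choose 2 ≤ 8 * turanE 3 n by omega)

theorem kTwo_five_le (n : ℕ) : kTwo 5 n ≤ 12 := by
  have := pred_mul_choose_two_le_mul_turanE 4 n
  exact kTwo_le (show 9 * n.choose 2 ≤ 12 * turanE 4 n by omega)

theorem kTwo_four_le_of_le {n : ℕ} (hn : n ≤ 13) : kTwo 4 n ≤ 7 :=
  kTwo_le (by rw [turanE_eq]; interval_cases n <;> decide)

theorem kTwo_five_le_of_le {n : ℕ} (hn : n ≤ 12) : kTwo 5 n ≤ 11 :=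
  kTwo_le (by rw [turanE_eq]; interval_cases n <;> decide)

theorem five_mul_choose_add_le_seven_mul_turanE {n : ℕ} (h2 : 2 ≤ n) (hn : n ≤ 14) :
    5 * n.choose 2 + (3 - n / 2) ≤ 7 * turanE 3 n := by
  rw [turanE_eq]
  interval_cases n <;> decide

end Turan

section CliquesOfSizeFour

theorem sum_le_of_not_hasStaircase_five {α : Type*} [DecidableEq α] {f : α → ℕ} {e a b c d : α}
    (h : ¬HasStaircase f {e, a, b, c, d}) (he : 3 ≤ f e) (ha : f a ≤ 7) (hb : f b ≤ 7)
    (hc : f c ≤ 7) (hd : f d ≤ 7) (hab : f a + f b ≤ 10) (hcd : f c + f d ≤ 10) :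
    f a + f b + (f c + f d) ≤ 17 := by
  by_contra! hsum
  wlog hab' : f a ≤ f b generalizing a b
  · exact this (by rwa [insert_comm b a]) hb ha (by omega) (by omega) (by omega)
  wlog hcd' : f c ≤ f d generalizing c d
  · exact this hd hc (by omega) (by rwa [pair_comm d c]) (by omega) (by omega)
  -- Ordered as `a, c` (or `c, a`), `e`, then the smaller and the larger of `b, d`, the five values
  -- are at least `1, 2, 3, 4, 5`.
  have hca : HasStaircase f {c, a} := by
    obtain hac | hca := le_total (f a) (f c)
    · exact (hasStaircase_singleton (by omega)).insert (by rw [card_singleton]; omega)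
    · rw [pair_comm]
      exact (hasStaircase_singleton (by omega)).insert (by rw [card_singleton]; omega)
  have heca : HasStaircase f {e, c, a} := hca.insert (card_le_two.trans_lt (by omega))
  have extend {b d : α} (hb : 4 ≤ f b) (hd : 5 ≤ f d) : HasStaircase f {d, b, e, c, a} :=
    (heca.insert (card_le_three.trans_lt hb)).insert (card_le_four.trans_lt hd)
  obtain hbd | hdb := le_total (f b) (f d)
  · refine h ?_
    convert extend (b := b) (d := d) (by omega) (by omega) using 1
    ext
    simp only [mem_insert, mem_singleton]
    tauto
  · refine h ?_
    convert extend (b := d) (d := b) (by omega) (by omega) using 1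
    ext
    simp only [mem_insert, mem_singleton]
    tauto

variable {V : Type*} [DecidableEq V] {f : Sym2 V → ℕ} {s : Finset V} {u v x y : V}

theorem StaircaseFree.add_star_le_ten (h : StaircaseFree (fun e => f e - 3) 3 s)
    (hf : ∀ e ∈ cliqueEdges s, f e ≤ 7) (huv : s(u, v) ∈ cliqueEdges s) (heavy : 6 ≤ f s(u, v))
    (hx : x ∈ s \ {u, v}) : f s(x, u) + f s(x, v) ≤ 10 := by
  obtain ⟨⟨hu, hv⟩, hne⟩ := mk_mem_cliqueEdges.1 huv
  have huv_staircase : HasStaircase (fun e => f e - 3 - 2) (cliqueEdges {u, v}) := by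
    rw [cliqueEdges_pair hne]
    exact hasStaircase_singleton (by omega)
  have := h.sum_star_le (by grind) (card_pair hne) huv_staircase (k := 4)
    (fun e he => Nat.sub_le_sub_right (hf e he) 3) (by omega) hx
  rw [sum_pair hne] at this
  omega

theorem StaircaseFree.two_stars_le_seventeen (h : StaircaseFree f 4 s)
    (h3 : StaircaseFree (fun e => f e - 3) 3 s)
    (hf : ∀ e ∈ cliqueEdges s, f e ≤ 7) (huv : s(u, v) ∈ cliqueEdges s) (heavy : 6 ≤ f s(u, v))
    (hxy : s(x, y) ∈ cliqueEdges (s \ {u, v})) (hfxy : 3 ≤ f s(x, y)) :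
    f s(x, u) + f s(x, v) + (f s(y, u) + f s(y, v)) ≤ 17 := by
  obtain ⟨⟨hu, hv⟩, huv_ne⟩ := mk_mem_cliqueEdges.1 huv
  obtain ⟨⟨hx, hy⟩, hxy_ne⟩ := mk_mem_cliqueEdges.1 hxy
  have hx_sum := h3.add_star_le_ten hf huv heavy hx
  have hy_sum := h3.add_star_le_ten hf huv heavy hy
  simp only [mem_sdiff, mem_insert, mem_singleton, not_or] at hx hy
  obtain ⟨hx, hxu, hxv⟩ := hx
  obtain ⟨hy, hyu, hyv⟩ := hy
  have le_seven {a b : V} (ha : a ∈ s) (hb : b ∈ s) (hab : a ≠ b) : f s(a, b) ≤ 7 :=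
    hf _ (mk_mem_cliqueEdges.2 ⟨⟨ha, hb⟩, hab⟩)
  refine sum_le_of_not_hasStaircase_five (e := s(x, y)) (fun hfive => ?_) hfxy
    (le_seven hx hu hxu) (le_seven hx hv hxv) (le_seven hy hu hyu) (le_seven hy hv hyv)
    hx_sum hy_sum
  have edges_eq : cliqueEdges {x, y, u, v} =
      insert s(u, v) {s(x, y), s(x, u), s(x, v), s(y, u), s(y, v)} := by
    rw [cliqueEdges_insert (by simp [*]), cliqueEdges_insert (by simp [*]),
      cliqueEdges_pair huv_ne]
    ext
    simp only [image_insert, image_singleton, mem_union, mem_insert, mem_singleton]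
    tauto
  refine h {x, y, u, v} (by simp [insert_subset_iff, *]) ?_ ?_
  · rw [card_insert_of_notMem, card_insert_of_notMem, card_pair huv_ne] <;> simp [*]
  · rw [edges_eq]
    exact hfive.insert (card_le_five.trans_lt heavy)

theorem StaircaseFree.sum_stars_add_three_le (h : StaircaseFree f 4 s)
    (h3 : StaircaseFree (fun e => f e - 3) 3 s)
    (hf : ∀ e ∈ cliqueEdges s, f e ≤ 7) (huv : s(u, v) ∈ cliqueEdges s) (heavy : 6 ≤ f s(u, v))
    (hxy : s(x, y) ∈ cliqueEdges (s \ {u, v})) (hfxy : 3 ≤ f s(x, y)) :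
    ∑ z ∈ s \ {u, v}, (f s(z, u) + f s(z, v)) + 3 ≤ 10 * #(s \ {u, v}) := by
  obtain ⟨⟨hx, hy⟩, hne⟩ := mk_mem_cliqueEdges.1 hxy
  have hpair : {x, y} ⊆ s \ {u, v} := insert_subset hx (singleton_subset_iff.2 hy)
  have pair_le := h.two_stars_le_seventeen h3 hf huv heavy hxy hfxy
  have rest_le : ∑ z ∈ (s \ {u, v}) \ {x, y}, (f s(z, u) + f s(z, v)) ≤
      #((s \ {u, v}) \ {x, y}) * 10 :=
    sum_le_card_nsmul _ _ _ fun z hz => h3.add_star_le_ten hf huv heavy (mem_sdiff.1 hz).1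
  have card_rest := card_sdiff_add_card_eq_card hpair
  rw [card_pair hne] at card_rest
  rw [← sum_sdiff hpair, sum_pair hne]
  omega

/- The slack `3 - #s / 2` carries the induction on `s \ {u, v}`: an edge `uv` of weight `7` exceeds
the average `5` by `2`, and when some edge off it has weight at least `3` the stars lose `3`. -/
theorem StaircaseFree.weight_le_five_mul_choose_add (h : StaircaseFree f 4 s)
    (h3 : StaircaseFree (fun e => f e - 3) 3 s) (hf : ∀ e ∈ cliqueEdges s, f e ≤ 7) :
    weight f s ≤ 5 * (#s).choose 2 + (3 - #s / 2) := by
  induction s using Finset.strongInduction with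
  | H s ih =>
    by_cases! light : ∀ e ∈ cliqueEdges s, f e ≤ 5
    · exact (weight_le_mul_choose light).trans (Nat.le_add_right _ _)
    obtain ⟨⟨u, v⟩, huv, heavy⟩ := light
    change 6 ≤ f s(u, v) at heavy
    obtain ⟨⟨hu, hv⟩, hne⟩ := mk_mem_cliqueEdges.1 huv
    have rest_subset : s \ {u, v} ⊆ s := sdiff_subset
    have hpair : {u, v} ⊆ s := insert_subset hu (singleton_subset_iff.2 hv)
    have card_s : #s = #(s \ {u, v}) + 2 := by
      rw [← card_pair hne, card_sdiff_add_card_eq_card hpair]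
    have choose_s : (#s).choose 2 = (#(s \ {u, v})).choose 2 + #(s \ {u, v}) * 2 + 1 := by
      rw [card_s, add_choose_two, Nat.choose_self]
    have huv_le : f s(u, v) ≤ 7 := hf _ huv
    rw [weight_eq_weight_sdiff_pair_add f huv, choose_s, card_s]
    by_cases! sparse : ∀ e ∈ cliqueEdges (s \ {u, v}), f e ≤ 2
    · have rest_le := weight_le_mul_choose sparse
      have stars_le : ∑ x ∈ s \ {u, v}, (f s(x, u) + f s(x, v)) ≤ #(s \ {u, v}) * 10 :=
        sum_le_card_nsmul _ _ _ fun x hx => h3.add_star_le_ten hf huv heavy hx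
      have choose_pos : 2 ≤ #(s \ {u, v}) → 0 < (#(s \ {u, v})).choose 2 := Nat.choose_pos
      omega
    · obtain ⟨⟨x, y⟩, hxy, hfxy⟩ := sparse
      have stars_le := h.sum_stars_add_three_le h3 hf huv heavy hxy hfxy
      have rest_le := ih _ (sdiff_ssubset hpair ⟨u, by simp⟩) (h.mono rest_subset)
        (h3.mono rest_subset) fun e he => hf e (cliqueEdges_mono rest_subset he)
      omega

theorem StaircaseFree.weight_le_seven_mul_turanE (h : StaircaseFree f 4 s)
    (hf : ∀ e ∈ cliqueEdges s, f e ≤ 7) (hs : #s ≤ 14) : weight f s ≤ 7 * turanE 3 #s := by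
  induction s using Finset.strongInduction with
  | H s ih =>
    obtain h3 | ⟨T, hTs, hT, weight_le⟩ := h.tsub_or_exists_weight_le hf (by norm_num)
    · obtain hs2 | hs2 := lt_or_ge #s 2
      · have weight_le := weight_le_mul_choose hf
        rw [Nat.choose_eq_zero_of_lt hs2] at weight_le
        omega
      · exact (h.weight_le_five_mul_choose_add h3 hf).trans
          (five_mul_choose_add_le_seven_mul_turanE hs2 hs)
    · have card_s : #s = #(s \ T) + 3 := by rw [← hT, card_sdiff_add_card_eq_card hTs]
      have rest_le := ih (s \ T) (sdiff_ssubset hTs (card_pos.1 (by omega)))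
        (h.mono sdiff_subset) (fun e he => hf e (cliqueEdges_mono sdiff_subset he)) (by omega)
      rw [card_s, turanE_add_self]
      omega

theorem StaircaseFree.weight_le_of_le_seven (h : StaircaseFree f 4 s) (hs : 14 ≤ #s)
    (hf : ∀ e ∈ cliqueEdges s, f e ≤ 7) : weight f s ≤ 5 * (#s).choose 2 := by
  refine weight_le_of_forall_card_eq (by norm_num) hs fun T hT hcard => ?_
  have := (h.mono hT).weight_le_seven_mul_turanE (fun e he => hf e (cliqueEdges_mono hT he))
    hcard.le
  rw [hcard, turanE_eq] at this
  exact this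

end CliquesOfSizeFour

section CliquesOfSizeFive

variable {V : Type*} [DecidableEq V] {f : Sym2 V → ℕ} {s : Finset V}

theorem StaircaseFree.weight_le_of_card_eq_nine (h : StaircaseFree f 5 s) (hs : #s = 9)
    (hf : ∀ e ∈ cliqueEdges s, f e ≤ 11) : weight f s ≤ 339 := by
  obtain h4 | ⟨T, hTs, hT, weight_le⟩ := h.tsub_or_exists_weight_le hf (by norm_num)
  · have shifted_le := h4.weight_le_seven_mul_turanE
      (fun e he => Nat.sub_le_sub_right (hf e he) 4) (by omega)
    have weight_le := weight_le_weight_tsub_add f s 4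
    rw [hs, show turanE 3 9 = 27 by rw [turanE_eq]; rfl] at shifted_le
    rw [hs, show Nat.choose 9 2 = 36 from rfl] at weight_le
    omega
  · have card_rest : #(s \ T) = 5 := by rw [card_sdiff_of_subset hTs, hs, hT]
    have card_edges : #(cliqueEdges (s \ T)) = 10 := by rw [card_cliqueEdges, card_rest]; rfl
    have rest_le : weight f (s \ T) ≤ (10 - 1) * 11 := card_edges ▸
      sum_le_of_not_hasStaircase (h _ sdiff_subset card_rest)
        (fun e he => hf e (cliqueEdges_mono sdiff_subset he)) (by omega)
    rw [card_rest, show Nat.choose 4 2 = 6 from rfl] at weight_le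
    omega

theorem StaircaseFree.weight_le_of_card_eq_thirteen (h : StaircaseFree f 5 s) (hs : #s = 13)
    (hf : ∀ e ∈ cliqueEdges s, f e ≤ 11) : weight f s ≤ 702 := by
  obtain h4 | ⟨T, hTs, hT, weight_le⟩ := h.tsub_or_exists_weight_le hf (by norm_num)
  · by_cases! hpos : ∀ e ∈ cliqueEdges s, 0 < f e
    · have weight_le := h.weight_le_of_pos (by norm_num) (by omega) hpos hf
      rwa [hs] at weight_le
    · obtain ⟨e, he, hfe⟩ := hpos
      have shifted_le := h4.weight_le_seven_mul_turanE
        (fun e he => Nat.sub_le_sub_right (hf e he) 4) (by omega)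
      have weight_le := weight_add_le_weight_tsub_add (c := 4) he (Nat.le_zero.1 hfe)
      rw [hs, show turanE 3 13 = 56 by rw [turanE_eq]; rfl] at shifted_le
      rw [hs, show Nat.choose 13 2 = 78 from rfl] at weight_le
      omega
  · have card_rest : #(s \ T) = 9 := by rw [card_sdiff_of_subset hTs, hs, hT]
    have rest_le := (h.mono sdiff_subset).weight_le_of_card_eq_nine card_rest
      fun e he => hf e (cliqueEdges_mono sdiff_subset he)
    rw [card_rest, show Nat.choose 4 2 = 6 from rfl] at weight_le
    omega

theorem StaircaseFree.weight_le_of_le_eleven (h : StaircaseFree f 5 s) (hs : 13 ≤ #s)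
    (hf : ∀ e ∈ cliqueEdges s, f e ≤ 11) : weight f s ≤ 9 * (#s).choose 2 :=
  weight_le_of_forall_card_eq (by norm_num) hs fun _ hT hcard =>
    (h.mono hT).weight_le_of_card_eq_thirteen hcard fun e he => hf e (cliqueEdges_mono hT he)

end CliquesOfSizeFive

theorem HasStaircase.hasWSB {n r : ℕ} {f : Sym2 (Fin n) → ℕ} {S : Finset (Fin n)}
    (h : HasStaircase f (cliqueEdges S)) (hS : #S = r) : HasWSB n r f S := by
  obtain ⟨g, g_injective, hg⟩ := h.exists_enumeration
  have card_edges : r.choose 2 = #(cliqueEdges S) := by rw [card_cliqueEdges, hS]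
  refine ⟨g ∘ Fin.cast card_edges, g_injective.comp (Fin.cast_injective _), fun i => ?_,
    fun i => (hg (Fin.cast card_edges i)).2⟩
  exact (mem_cliqueEdges.1 (hg _).1).symm

/-- Conjecture 2.2 (i) for `r ∈ {4,5}`: if `f` is a `k₁`-weighting (`k₁ = k₂ − 1`) on `K_n`
such that no `r`-clique has weight sequence bound `(1, …, C(r,2))`, then
`Σ_e f(e) ≤ (C(r,2)−1)·C(n,2)`. -/
theorem weighted_bound_k1 (r n : ℕ) (hr : r = 4 ∨ r = 5) (hn : r ≤ n)
    (f : Sym2 (Fin n) → ℕ)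
    (hf : ∀ e : Sym2 (Fin n), ¬ e.IsDiag → f e ≤ kTwo r n - 1)
    (hwsb : ∀ S : Finset (Fin n), S.card = r → ¬ HasWSB n r f S) :
    ∑ e ∈ (⊤ : SimpleGraph (Fin n)).edgeFinset, f e ≤ (r.choose 2 - 1) * n.choose 2 := by
  have hfree : StaircaseFree f r univ := fun S _ hS hstair => hwsb S hS (hstair.hasWSB hS)
  have f_le {k : ℕ} (hk : kTwo r n ≤ k + 1) (e) (he : e ∈ cliqueEdges univ) : f e ≤ k :=
    (hf e (mem_cliqueEdges.1 he).2).trans (by omega)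
  have hcard : r ≤ #(univ : Finset (Fin n)) := by rwa [card_fin]
  suffices weight f univ ≤ (r.choose 2 - 1) * (#(univ : Finset (Fin n))).choose 2 by
    rwa [weight, cliqueEdges_univ, card_fin] at this
  obtain rfl | rfl := hr
  · obtain hn13 | hn14 := le_or_gt n 13
    · exact hfree.weight_le_of_le_choose (by norm_num) hcard (f_le (kTwo_four_le_of_le hn13))
    · exact hfree.weight_le_of_le_seven (by rwa [card_fin]) (f_le (kTwo_four_le n))
  · obtain hn12 | hn13 := le_or_gt n 12
    · exact hfree.weight_le_of_le_choose (by norm_num) hcard (f_le (kTwo_five_le_of_le hn12))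
    · exact hfree.weight_le_of_le_eleven (by rwa [card_fin]) (f_le (kTwo_five_le n))
end
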